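/- Let K be an algebraically closed field of characteristic zero, B a finitely generated commutative K-algebra that is an integral domain, and A = B[u]. Then at least one of the following holds: (A) HD*(A) = A; (B) HD*(A) is not a finitely generated K-algebra; (C) B is rigid and HD*(A) equals the image of B in A under the constant embedding. -/

import Mathlib

/-!
Write `A = B[X]`. Since `d/dX` has slice `X`, the algebra `HD*(A)` contains `B`.

If `B` is rigid, let `D` be a locally nilpotent derivation of `A`. As `B` is finitely generated,
`D` raises the `X`-degree by a bounded amount. Its top homogeneous part `T` of degree `k ≥ 0` is
again locally nilpotent, and `X` divides `T X`, which forces `T X = 0`; then `T = X^k δ` with `δ`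
a locally nilpotent derivation of `B`, so `T = 0` (`top_vanish`). Descending to `k = 0` yields
`D B = 0`, so `D = D(X) d/dX` and, when `D` has a slice, its kernel is `B` (`HDStar_of_rigid`).

If `B` has a locally nilpotent derivation `δ ≠ 0`, choose `b`, `c = δ b ≠ 0` with `δ c = 0`. The
derivations `d/dX - X^m δ` are locally nilpotent with slice `X` and kill `(m+1) b + c X^(m+1)`, so
`c X^n ∈ HD*(A)` for all `n` (`C_mul_X_pow_mem_HDStar`). If `HD*(A)` is finitely generated, it is
noetherian, and the ideal generated by the `c X^n` being finitely generated gives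
`X^N = ∑_{i<N} r_i X^i` with `r_i ∈ HD*(A)`. Stability under the automorphisms `X ↦ 2X` and
`X ↦ X + 1` shows that `a X ∈ HD*(A)` for every coefficient `a` of positive degree of an element of
`HD*(A)` (`coeff_mul_X_mem_HDStar`). The coefficient of `X^N` in the relation writes `1` as a sum of
such `a`, whence `X ∈ HD*(A)` and `HD*(A) = A` (`HDStar_of_not_rigid`).
-/

/-- A K-derivation is locally nilpotent (an LND) if for every element `a`
there exists `n ≥ 1` with `D^[n] a = 0`. -/
def IsLND {K A : Type*} [CommRing K] [CommRing A] [Algebra K A]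
    (D : Derivation K A A) : Prop :=
  ∀ a : A, ∃ n : ℕ, 1 ≤ n ∧ (⇑D)^[n] a = 0

/-- The modified Derksen invariant `HD*(A)`: the K-subalgebra of `A` generated by
the union of the kernels of all LNDs of `A` that possess a slice. -/
def HDStar (K A : Type*) [CommRing K] [CommRing A] [Algebra K A] : Subalgebra K A :=
  Algebra.adjoin K {a : A | ∃ D : Derivation K A A, IsLND D ∧ (∃ s : A, D s = 1) ∧ D a = 0}

open Polynomial

/-! ### Iterates of derivations -/

section Iterates

variable {K A : Type*} [CommRing K] [CommRing A] [Algebra K A]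

theorem der_iterate_zero (D : Derivation K A A) (n : ℕ) : (⇑D)^[n] 0 = 0 := by
  induction n with
  | zero => rfl
  | succ n ih => rw [Function.iterate_succ_apply, map_zero, ih]

theorem der_iterate_add (D : Derivation K A A) (n : ℕ) (a b : A) :
    (⇑D)^[n] (a + b) = (⇑D)^[n] a + (⇑D)^[n] b := by
  induction n generalizing a b with
  | zero => rfl
  | succ n ih => simp only [Function.iterate_succ_apply, map_add, ih]

theorem der_iterate_eq_zero_of_le (D : Derivation K A A) {n m : ℕ} (h : n ≤ m) {a : A}
    (ha : (⇑D)^[n] a = 0) : (⇑D)^[m] a = 0 := by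
  obtain ⟨k, rfl⟩ := Nat.exists_eq_add_of_le h
  rw [add_comm, Function.iterate_add_apply, ha, der_iterate_zero]

/-- The `K`-submodule of elements annihilated by some iterate of `D`. -/
def nilSub (D : Derivation K A A) : Submodule K A where
  carrier := {a | ∃ n : ℕ, (⇑D)^[n] a = 0}
  zero_mem' := ⟨0, rfl⟩
  add_mem' := by
    rintro a b ⟨n, hn⟩ ⟨m, hm⟩
    refine ⟨max n m, ?_⟩
    rw [der_iterate_add, der_iterate_eq_zero_of_le D (le_max_left n m) hn,
      der_iterate_eq_zero_of_le D (le_max_right n m) hm, add_zero]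
  smul_mem' := by
    rintro c a ⟨n, hn⟩
    refine ⟨n, ?_⟩
    have : ∀ n (a : A), (⇑D)^[n] (c • a) = c • (⇑D)^[n] a := by
      intro n
      induction n with
      | zero => intro a; rfl
      | succ n ih => intro a; simp only [Function.iterate_succ_apply, Derivation.map_smul, ih]
    rw [this, hn, smul_zero]

theorem mem_nilSub {D : Derivation K A A} {a : A} : a ∈ nilSub D ↔ ∃ n : ℕ, (⇑D)^[n] a = 0 :=
  Iff.rfl

theorem mem_nilSub_of_apply {D : Derivation K A A} {a : A} (h : D a ∈ nilSub D) :
    a ∈ nilSub D := by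
  obtain ⟨n, hn⟩ := h
  exact ⟨n + 1, by rw [Function.iterate_succ_apply, hn]⟩

theorem isLND_iff {D : Derivation K A A} : IsLND D ↔ ∀ a, a ∈ nilSub D := by
  constructor
  · intro h a
    obtain ⟨n, -, hn⟩ := h a
    exact ⟨n, hn⟩
  · intro h a
    obtain ⟨n, hn⟩ := h a
    exact ⟨n + 1, by omega, der_iterate_eq_zero_of_le D (Nat.le_succ n) hn⟩

/-- The extreme term of the Leibniz rule: if `D^{n+1} f = 0` and `D^{m+1} g = 0`, then all terms
of `D^{n+m} (f g)` vanish except the one with `D^n f` and `D^m g`. -/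
theorem iterate_mul_top (D : Derivation K A A) (N : ℕ) : ∀ (n m : ℕ) (f g : A), n + m = N →
    (⇑D)^[n + 1] f = 0 → (⇑D)^[m + 1] g = 0 →
    (⇑D)^[N] (f * g) = (N.choose n : A) * ((⇑D)^[n] f * (⇑D)^[m] g) := by
  induction N with
  | zero =>
    intro n m f g h hf hg
    obtain rfl : n = 0 := by omega
    obtain rfl : m = 0 := by omega
    simp
  | succ N ih =>
    intro n m f g h hf hg
    rw [Function.iterate_succ_apply, Derivation.leibniz, smul_eq_mul, smul_eq_mul, der_iterate_add]
    rcases n with _ | n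
    · obtain rfl : m = N + 1 := by omega
      have hf0 : D f = 0 := by simpa using hf
      rw [hf0, mul_zero, der_iterate_zero, add_zero,
        ih 0 N f (D g) (by omega) hf (by rwa [Function.iterate_succ_apply] at hg)]
      simp
    · rw [mul_comm g (D f), ih n m (D f) g (by omega)
        (by rwa [Function.iterate_succ_apply] at hf) hg]
      rcases m with _ | m
      · obtain rfl : N = n := by omega
        have hg0 : D g = 0 := by simpa using hg
        rw [hg0, mul_zero, der_iterate_zero]
        simp
      · rw [ih (n + 1) m f (D g) (by omega) hf (by rwa [Function.iterate_succ_apply] at hg)]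
        simp only [Nat.choose_succ_succ, Function.iterate_succ_apply, Nat.cast_add]
        ring

/-- If `a ≠ 0` is eventually killed by `D`, then there is a last nonvanishing iterate. -/
theorem exists_last {D : Derivation K A A} {a : A} (h : a ∈ nilSub D) (ha : a ≠ 0) :
    ∃ n : ℕ, (⇑D)^[n] a ≠ 0 ∧ (⇑D)^[n + 1] a = 0 := by
  classical
  have h' : ∃ n : ℕ, (⇑D)^[n] a = 0 := h
  have hpos : Nat.find h' ≠ 0 := by
    intro h0
    have := Nat.find_spec h'
    rw [h0] at this
    exact ha this
  obtain ⟨k, hk⟩ := Nat.exists_eq_succ_of_ne_zero hpos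
  refine ⟨k, Nat.find_min h' (by omega), ?_⟩
  have := Nat.find_spec h'
  rwa [hk] at this

/-- A locally nilpotent derivation of a domain of characteristic zero cannot send `f` to a nonzero
multiple of `f`: the degree function it defines is additive on products, and it would have to
drop by one. -/
theorem lnd_eq_zero_of_dvd [IsDomain A] [CharZero A] {D : Derivation K A A} (hD : IsLND D)
    {f g : A} (h : D f = f * g) : D f = 0 := by
  by_contra hne
  have hf : f ≠ 0 := by rintro rfl; simp at hne
  have hg : g ≠ 0 := by rintro rfl; simp [h] at hne
  rw [isLND_iff] at hD
  obtain ⟨n, hn, hn'⟩ := exists_last (hD f) hf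
  obtain ⟨m, hm, hm'⟩ := exists_last (hD g) hg
  have h1 := iterate_mul_top D (n + m) n m f g rfl hn' hm'
  rw [← h, ← Function.iterate_succ_apply,
    der_iterate_eq_zero_of_le D (by omega) hn'] at h1
  have hc : ((n + m).choose n : A) ≠ 0 := by
    exact_mod_cast (Nat.choose_pos (Nat.le_add_right n m)).ne'
  exact mul_ne_zero hc (mul_ne_zero hn hm) h1.symm

end Iterates

/-! ### Derivations of polynomial rings -/

section PolynomialDerivations

variable {K B : Type*} [CommRing K] [CommRing B] [Algebra K B]

/-- The extension of a derivation `δ` of `B` to `B[X]` acting on coefficients, so with `X ↦ 0`. -/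
noncomputable def extDer (δ : Derivation K B B) : Derivation K B[X] B[X] :=
  (PolynomialModule.equivPolynomialSelf (R := B)).toLinearMap.compDer δ.mapCoeffs

@[simp]
theorem extDer_C (δ : Derivation K B B) (b : B) : extDer δ (C b) = C (δ b) := by
  simp [extDer, PolynomialModule.equivPolynomialSelf_apply_eq]

@[simp]
theorem extDer_X (δ : Derivation K B B) : extDer δ X = 0 := by
  simp [extDer]

variable (K B) in
/-- The derivation `d/dX` of `B[X]`, regarded as `K`-linear. -/
noncomputable def ddX : Derivation K B[X] B[X] := (derivative' (R := B)).restrictScalars K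

theorem ddX_apply (f : B[X]) : ddX K B f = derivative f := rfl

theorem der_C_mul_X_pow (D : Derivation K B[X] B[X]) (b : B) (i : ℕ) :
    D (C b * X ^ i) = D (C b) * X ^ i + C ((i : B) * b) * X ^ (i - 1) * D X := by
  rw [Derivation.leibniz, Derivation.leibniz_pow]
  simp only [smul_eq_mul, nsmul_eq_mul, map_mul, map_natCast]
  ring

/-- Local nilpotency on `B[X]` may be tested on monomials. -/
theorem isLND_of_monomials {D : Derivation K B[X] B[X]}
    (h : ∀ (b : B) (i : ℕ), C b * X ^ i ∈ nilSub D) : IsLND D := by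
  rw [isLND_iff]
  intro f
  induction f using Polynomial.induction_on' with
  | add p q hp hq => exact add_mem hp hq
  | monomial n a => rw [← C_mul_X_pow_eq_monomial]; exact h a n

end PolynomialDerivations

/-! ### Rigid coefficient rings -/

section Rigid

variable {K B : Type*} [Field K] [CommRing B] [Algebra K B]

/-- The derivation of `B` sending `b` to the coefficient of `X^k` in `D b`. -/
noncomputable def coeffDer (D : Derivation K B[X] B[X]) (k : ℕ) : Derivation K B B :=
  Derivation.mk'
    { toFun := fun b => (D (C b)).coeff k
      map_add' := fun x y => by simp
      map_smul' := fun r x => by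
        rw [← smul_C, Derivation.map_smul, coeff_smul, RingHom.id_apply] }
    (fun a b => by simp)

theorem coeffDer_apply (D : Derivation K B[X] B[X]) (k : ℕ) (b : B) :
    coeffDer D k b = (D (C b)).coeff k := rfl

/-- `D` raises the `X`-degree by at most `k`. -/
def ShiftLE (D : Derivation K B[X] B[X]) (k : ℕ) : Prop :=
  (∀ b, (D (C b)).natDegree ≤ k) ∧ (D X).natDegree ≤ k + 1

/-- The part of `D` that is homogeneous of degree `k` for the grading of `B[X]` by powers
of `X`. -/
noncomputable def topDer (D : Derivation K B[X] B[X]) (k : ℕ) : Derivation K B[X] B[X] :=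
  (X ^ k : B[X]) • extDer (coeffDer D k) + (C ((D X).coeff (k + 1)) * X ^ (k + 1)) • ddX K B

theorem topDer_C (D : Derivation K B[X] B[X]) (k : ℕ) (b : B) :
    topDer D k (C b) = C (coeffDer D k b) * X ^ k := by
  simp only [topDer, Derivation.add_apply, Derivation.smul_apply, extDer_C, ddX_apply,
    derivative_C, smul_eq_mul, mul_zero, add_zero]
  exact mul_comm _ _

theorem topDer_X (D : Derivation K B[X] B[X]) (k : ℕ) :
    topDer D k X = C ((D X).coeff (k + 1)) * X ^ (k + 1) := by
  simp [topDer, ddX_apply]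

theorem topDer_monomial (D : Derivation K B[X] B[X]) (k : ℕ) (b : B) (i : ℕ) :
    topDer D k (C b * X ^ i) =
      C (coeffDer D k b + i * b * (D X).coeff (k + 1)) * X ^ (i + k) := by
  rw [der_C_mul_X_pow, topDer_C, topDer_X]
  rcases i with _ | i
  · simp
  · simp only [Nat.add_sub_cancel, map_add, map_mul, map_natCast]
    ring

theorem coeff_der_monomial {D : Derivation K B[X] B[X]} {k : ℕ} (h : ShiftLE D k) (b : B)
    {i j : ℕ} (hij : i ≤ j) :
    (D (C b * X ^ i)).natDegree ≤ j + k ∧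
      (D (C b * X ^ i)).coeff (j + k) =
        (topDer D k (C ((C b * X ^ i : B[X]).coeff j) * X ^ j)).coeff (j + k) := by
  have hd : ∀ n, i + k < n → (D (C b * X ^ i)).coeff n = 0 := by
    intro n hn
    obtain ⟨n, rfl⟩ := Nat.exists_eq_add_of_le (show i ≤ n by omega)
    rw [der_C_mul_X_pow, coeff_add, mul_assoc (C _), coeff_C_mul, add_comm i n, coeff_mul_X_pow,
      coeff_eq_zero_of_natDegree_lt (lt_of_le_of_lt (h.1 b) (by omega)), zero_add]
    rcases i with _ | i
    · simp
    · rw [Nat.add_sub_cancel, show n + (i + 1) = (n + 1) + i by omega, coeff_X_pow_mul,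
        coeff_eq_zero_of_natDegree_lt (lt_of_le_of_lt h.2 (by omega)), mul_zero]
  refine ⟨natDegree_le_iff_coeff_eq_zero.2 fun n hn => hd n (by omega), ?_⟩
  rcases hij.lt_or_eq with hlt | rfl
  · rw [hd _ (by omega), coeff_C_mul, coeff_X_pow, if_neg (by omega)]
    simp
  · rw [topDer_monomial, coeff_C_mul, coeff_C_mul, coeff_X_pow, coeff_X_pow, if_pos rfl, if_pos rfl,
      der_C_mul_X_pow, coeff_add, mul_assoc (C _), coeff_C_mul, add_comm i k, coeff_mul_X_pow,
      coeffDer_apply]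
    rcases i with _ | i
    · simp
    · rw [Nat.add_sub_cancel, show k + (i + 1) = (k + 1) + i by omega, coeff_X_pow_mul]
      simp

/-- On polynomials of degree at most `j`, the leading behaviour of `D` is that of `topDer D k`. -/
theorem der_top {D : Derivation K B[X] B[X]} {k : ℕ} (h : ShiftLE D k) (j : ℕ) (f : B[X])
    (hf : f.natDegree ≤ j) :
    (D f).natDegree ≤ j + k ∧
      (D f).coeff (j + k) = (topDer D k (C (f.coeff j) * X ^ j)).coeff (j + k) := by
  refine Polynomial.induction_with_natDegree_le
    (fun f => (D f).natDegree ≤ j + k ∧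
      (D f).coeff (j + k) = (topDer D k (C (f.coeff j) * X ^ j)).coeff (j + k)) j
    (by simp) (fun n r _ hn => coeff_der_monomial h r hn) ?_ f hf
  rintro f g - - ⟨h1, h2⟩ ⟨h3, h4⟩
  refine ⟨by rw [map_add]; exact natDegree_add_le_of_degree_le h1 h3, ?_⟩
  rw [map_add, coeff_add, h2, h4, coeff_add, C_add, add_mul, map_add, coeff_add]

theorem der_top_iterate {D : Derivation K B[X] B[X]} {k : ℕ} (h : ShiftLE D k) (n : ℕ) :
    ∀ (j : ℕ) (f : B[X]), f.natDegree ≤ j →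
    (⇑(topDer D k))^[n] (C (f.coeff j) * X ^ j) =
      C (((⇑D)^[n] f).coeff (j + n * k)) * X ^ (j + n * k) := by
  induction n with
  | zero => intro j f _; simp
  | succ n ih =>
    intro j f hf
    obtain ⟨h1, h2⟩ := der_top h j f hf
    have h3 : topDer D k (C (f.coeff j) * X ^ j) = C ((D f).coeff (j + k)) * X ^ (j + k) := by
      rw [h2, topDer_monomial, coeff_C_mul, coeff_X_pow, if_pos rfl, mul_one]
    rw [Function.iterate_succ_apply, h3, ih _ _ h1, Function.iterate_succ_apply,
      show j + k + n * k = j + (n + 1) * k by ring]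

theorem topDer_isLND {D : Derivation K B[X] B[X]} (hD : IsLND D) {k : ℕ} (h : ShiftLE D k) :
    IsLND (topDer D k) := by
  refine isLND_of_monomials fun b i => ?_
  obtain ⟨n, hn⟩ := isLND_iff.1 hD (C b * X ^ i)
  refine ⟨n, ?_⟩
  have := der_top_iterate h n i (C b * X ^ i) (natDegree_C_mul_X_pow_le b i)
  rw [hn, coeff_C_mul, coeff_X_pow, if_pos rfl, mul_one] at this
  simpa using this

/-- A derivation of `B[X]` has bounded `X`-degree shift as soon as `B` is finitely generated. -/
theorem exists_shift [Algebra.FiniteType K B] (D : Derivation K B[X] B[X]) :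
    ∃ k, ShiftLE D k := by
  obtain ⟨s, hs⟩ := (Algebra.FiniteType.out : (⊤ : Subalgebra K B).FG)
  set m := s.sup fun b => (D (C b)).natDegree with hm
  have hb : ∀ b : B, (D (C b)).natDegree ≤ m := by
    intro b
    have hbs : b ∈ Algebra.adjoin K (s : Set B) := by rw [hs]; trivial
    induction hbs using Algebra.adjoin_induction with
    | mem x hx => exact Finset.le_sup (f := fun b => (D (C b)).natDegree) hx
    | algebraMap r =>
      have : (C (algebraMap K B r) : B[X]) = algebraMap K B[X] r := rfl
      rw [this, Derivation.map_algebraMap]; simp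
    | add x y _ _ hx hy =>
      rw [C_add, map_add]; exact natDegree_add_le_of_degree_le hx hy
    | mul x y _ _ hx hy =>
      rw [C_mul, Derivation.leibniz, smul_eq_mul, smul_eq_mul]
      exact natDegree_add_le_of_degree_le ((natDegree_C_mul_le _ _).trans hy)
        ((natDegree_C_mul_le _ _).trans hx)
  exact ⟨max m (D X).natDegree, fun b => (hb b).trans (le_max_left _ _), by omega⟩

theorem C_mem_HDStar (b : B) : C b ∈ HDStar K B[X] := by
  refine Algebra.subset_adjoin ⟨ddX K B, isLND_of_monomials fun b i => ?_, ⟨X, ?_⟩, ?_⟩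
  · induction i generalizing b with
    | zero => exact ⟨1, by simp [ddX_apply]⟩
    | succ i ih =>
      refine mem_nilSub_of_apply ?_
      rw [ddX_apply, derivative_C_mul_X_pow]
      exact ih _
  · simp [ddX_apply]
  · simp [ddX_apply]

variable [CharZero K] [IsDomain B]

/-- Over a rigid `B`, the homogeneous part of degree `k ≥ 0` bounding a locally nilpotent `D`
vanishes: as `X` divides the image of `X`, that image is zero, and what remains is
`X^k` times a locally nilpotent derivation of `B`. -/
theorem top_vanish (hB : ∀ δ : Derivation K B B, IsLND δ → δ = 0)
    {D : Derivation K B[X] B[X]} (hD : IsLND D) {k : ℕ} (h : ShiftLE D k) :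
    (∀ b, (D (C b)).coeff k = 0) ∧ (D X).coeff (k + 1) = 0 := by
  have : CharZero B := charZero_of_injective_algebraMap (algebraMap K B).injective
  have hT := topDer_isLND hD h
  have hX : topDer D k X = 0 := by
    refine lnd_eq_zero_of_dvd hT (g := C ((D X).coeff (k + 1)) * X ^ k) ?_
    rw [topDer_X]; ring
  have hc : (D X).coeff (k + 1) = 0 := by
    rw [topDer_X] at hX
    simpa using hX
  refine ⟨fun b => ?_, hc⟩
  suffices hδ : coeffDer D k = 0 by rw [← coeffDer_apply, hδ]; rfl
  refine hB _ (isLND_iff.2 fun b => ?_)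
  have hit : ∀ n (b : B) (i : ℕ), (⇑(topDer D k))^[n] (C b * X ^ i) =
      C ((⇑(coeffDer D k))^[n] b) * X ^ (i + n * k) := by
    intro n
    induction n with
    | zero => intro b i; simp
    | succ n ih =>
      intro b i
      rw [Function.iterate_succ_apply, topDer_monomial, hc, mul_zero, add_zero, ih,
        Function.iterate_succ_apply, show i + k + n * k = i + (n + 1) * k by ring]
  obtain ⟨n, hn⟩ := isLND_iff.1 hT (C b * X ^ 0)
  refine ⟨n, ?_⟩
  rw [hit] at hn
  simpa using hn

theorem der_C_eq_zero_of_shift (hB : ∀ δ : Derivation K B B, IsLND δ → δ = 0)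
    {D : Derivation K B[X] B[X]} (hD : IsLND D) (k : ℕ) (h : ShiftLE D k) (b : B) :
    D (C b) = 0 := by
  induction k with
  | zero =>
    have h0 := (top_vanish hB hD h).1 b
    rw [eq_C_of_natDegree_le_zero (h.1 b), h0, C_0]
  | succ k ih =>
    obtain ⟨h1, h2⟩ := top_vanish hB hD h
    exact ih ⟨fun b => natDegree_le_pred (h.1 b) (h1 b), natDegree_le_pred h.2 h2⟩

/-- If `B` is rigid, every nonzero locally nilpotent derivation of `B[X]` is a multiple
of `d/dX`, so its kernel is `B`. -/
theorem HDStar_of_rigid [Algebra.FiniteType K B]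
    (hB : ∀ δ : Derivation K B B, IsLND δ → δ = 0) :
    (HDStar K B[X] : Set B[X]) = Set.range (C : B → B[X]) := by
  have : CharZero B := charZero_of_injective_algebraMap (algebraMap K B).injective
  apply Set.Subset.antisymm
  · have : HDStar K B[X] ≤ ((CAlgHom : B →ₐ[B] B[X]).restrictScalars K).range := by
      refine Algebra.adjoin_le ?_
      rintro f ⟨D, hD, ⟨s, hs⟩, hf⟩
      obtain ⟨k, hk⟩ := exists_shift D
      have hC := der_C_eq_zero_of_shift hB hD k hk
      have hform : ∀ g, D g = derivative g * D X := by
        intro g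
        induction g using Polynomial.induction_on' with
        | add p q hp hq => rw [map_add, hp, hq, derivative_add, add_mul]
        | monomial n a =>
          rw [← C_mul_X_pow_eq_monomial, der_C_mul_X_pow, hC, derivative_C_mul_X_pow]
          simp [mul_comm]
      have hX : D X ≠ 0 := by
        intro h0
        rw [hform, h0, mul_zero] at hs
        exact zero_ne_one hs
      have hder : derivative f = 0 := by
        rw [hform] at hf
        exact (mul_eq_zero.1 hf).resolve_right hX
      exact ⟨f.coeff 0, (eq_C_of_derivative_eq_zero hder).symm⟩
    intro f hf
    obtain ⟨b, hb⟩ := this hf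
    exact ⟨b, hb⟩
  · rintro _ ⟨b, rfl⟩
    exact C_mem_HDStar b

end Rigid

/-! ### Non-rigid coefficient rings -/

section NonRigid

/-- `HD*` is stable under automorphisms, since these permute the locally nilpotent derivations
with a slice by conjugation. -/
theorem HDStar_map {K A : Type*} [CommRing K] [CommRing A] [Algebra K A] (φ : A ≃ₐ[K] A) {f : A}
    (hf : f ∈ HDStar K A) : φ f ∈ HDStar K A := by
  suffices HDStar K A ≤ (HDStar K A).comap φ.toAlgHom from this hf
  refine Algebra.adjoin_le ?_
  rintro f ⟨D, hD, ⟨s, hs⟩, hf⟩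
  let E : Derivation K A A := Derivation.mk'
    (φ.toLinearMap ∘ₗ D.toLinearMap ∘ₗ φ.symm.toLinearMap) (fun a b => by simp)
  have hE : ∀ a, E a = φ (D (φ.symm a)) := fun a => rfl
  have hEn : ∀ n a, (⇑E)^[n] a = φ ((⇑D)^[n] (φ.symm a)) := by
    intro n
    induction n with
    | zero => intro a; simp
    | succ n ih => intro a; simp [Function.iterate_succ_apply, ih, hE]
  refine Algebra.subset_adjoin ⟨E, fun a => ?_, ⟨φ s, ?_⟩, ?_⟩
  · obtain ⟨n, hn, h⟩ := hD (φ.symm a)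
    exact ⟨n, hn, by rw [hEn, h, map_zero]⟩
  · simp [hE, hs]
  · simp [hE, hf]

variable {K B : Type*} [Field K] [CommRing B] [Algebra K B]

/-- The derivation `d/dX - X^m δ`, which is the conjugate of `d/dX` by
`exp (X^(m+1) δ / (m+1))`. -/
noncomputable def twistDer (δ : Derivation K B B) (m : ℕ) : Derivation K B[X] B[X] :=
  ddX K B - (X ^ m : B[X]) • extDer δ

theorem twistDer_C (δ : Derivation K B B) (m : ℕ) (b : B) :
    twistDer δ m (C b) = -(C (δ b) * X ^ m) := by
  simp [twistDer, ddX_apply]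

theorem twistDer_X (δ : Derivation K B B) (m : ℕ) : twistDer δ m X = 1 := by
  simp [twistDer, ddX_apply]

theorem twistDer_isLND {δ : Derivation K B B} (hδ : IsLND δ) (m : ℕ) :
    IsLND (twistDer δ m) := by
  have key : ∀ n (b : B), (⇑δ)^[n] b = 0 → ∀ i : ℕ, C b * X ^ i ∈ nilSub (twistDer δ m) := by
    intro n
    induction n with
    | zero =>
      intro b hb i
      obtain rfl : b = 0 := hb
      simp
    | succ n ihn =>
      intro b hb i
      -- The first summand of the image has lower `X`-degree, the second lower `δ`-order.
      have hstep : twistDer δ m (C b * X ^ i) =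
          (i : K) • (C b * X ^ (i - 1)) - C (δ b) * X ^ (m + i) := by
        rw [der_C_mul_X_pow, twistDer_C, twistDer_X, Algebra.smul_def]
        simp only [map_natCast, map_mul]
        ring
      induction i with
      | zero =>
        refine mem_nilSub_of_apply ?_
        rw [hstep, Nat.cast_zero, zero_smul]
        exact sub_mem (zero_mem _) (ihn _ hb _)
      | succ i ihi =>
        refine mem_nilSub_of_apply ?_
        rw [hstep]
        refine sub_mem (Submodule.smul_mem _ _ (ihi ?_)) (ihn _ hb _)
        rw [der_C_mul_X_pow, twistDer_C, twistDer_X, Algebra.smul_def]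
        simp only [map_natCast, map_mul]
        ring
  refine isLND_of_monomials fun b i => ?_
  obtain ⟨n, hn⟩ := isLND_iff.1 hδ b
  exact key n b hn i

/-- If `δ b = c` and `δ c = 0`, then `(m+1) b + c X^(m+1)` is killed by `d/dX - X^m δ`; hence
`c B[X]` lies in `HD*`. -/
theorem C_mul_X_pow_mem_HDStar {δ : Derivation K B B} (hδ : IsLND δ) {b c : B} (hb : δ b = c)
    (hc : δ c = 0) (n : ℕ) : C c * X ^ n ∈ HDStar K B[X] := by
  rcases n with _ | m
  · simpa using C_mem_HDStar c
  · have h1 : C (((m + 1 : ℕ) : B) * b) + C c * X ^ (m + 1) ∈ HDStar K B[X] := by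
      refine Algebra.subset_adjoin
        ⟨twistDer δ m, twistDer_isLND hδ m, ⟨X, twistDer_X δ m⟩, ?_⟩
      rw [map_add, der_C_mul_X_pow, twistDer_C, twistDer_C, twistDer_X, hc, Derivation.leibniz,
        Derivation.map_natCast, hb]
      simp
    simpa using sub_mem h1 (C_mem_HDStar (((m + 1 : ℕ) : B) * b))

variable [CharZero K]

/-- `HD*` is graded by powers of `X`: it is stable under `X ↦ 2 X`, whose eigenvalues on the
homogeneous components are distinct. -/
theorem monomial_mem_HDStar (d : ℕ) : ∀ f : B[X], f.natDegree < d → f ∈ HDStar K B[X] →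
    ∀ i, C (f.coeff i) * X ^ i ∈ HDStar K B[X] := by
  induction d with
  | zero => intro f hf; omega
  | succ d ih =>
    intro f hfd hf
    have h2 : (algebraMap K B 2) * algebraMap K B 2⁻¹ = 1 := by
      rw [← map_mul, mul_inv_cancel₀ two_ne_zero, map_one]
    let _ : Invertible (algebraMap K B 2) := ⟨algebraMap K B 2⁻¹, by rw [mul_comm, h2], h2⟩
    let φ : B[X] ≃ₐ[K] B[X] := (algEquivCMulXAddC (algebraMap K B 2) 0).restrictScalars K
    have hφ : ∀ i, (φ f).coeff i = (2 : K) ^ i • f.coeff i := by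
      intro i
      have : φ f = f.comp (C (algebraMap K B 2) * X) := by
        simp [φ, Polynomial.aeval_def, Polynomial.comp, Polynomial.algebraMap_eq]
      rw [this, comp_C_mul_X_coeff, Algebra.smul_def, map_pow, mul_comm]
    have hlow : ∀ i, i ≠ d → C (f.coeff i) * X ^ i ∈ HDStar K B[X] := by
      intro i hid
      rcases lt_or_ge d i with hlt | hle
      · rw [coeff_eq_zero_of_natDegree_lt (by omega)]; simp
      have hid' : i < d := by omega
      have hg : φ f - (2 : K) ^ d • f ∈ HDStar K B[X] :=
        sub_mem (HDStar_map φ hf) (Subalgebra.smul_mem _ hf _)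
      have hgc : ∀ i, (φ f - (2 : K) ^ d • f).coeff i = ((2 : K) ^ i - 2 ^ d) • f.coeff i := by
        intro i
        rw [coeff_sub, hφ, coeff_smul, sub_smul]
      have hgd : (φ f - (2 : K) ^ d • f).natDegree < d := by
        refine lt_of_le_of_lt (natDegree_le_iff_coeff_eq_zero.2 fun j hj => ?_)
          (Nat.sub_lt (by omega) one_pos : d - 1 < d)
        rw [hgc]
        rcases (show d ≤ j by omega).eq_or_lt with rfl | hdj
        · rw [sub_self, zero_smul]
        · rw [coeff_eq_zero_of_natDegree_lt (by omega), smul_zero]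
      have := Subalgebra.smul_mem _ (ih _ hgd hg i) ((2 : K) ^ i - 2 ^ d)⁻¹
      have hne : (2 : K) ^ i - 2 ^ d ≠ 0 := by
        rw [sub_ne_zero]
        exact_mod_cast (Nat.pow_lt_pow_right (by norm_num) hid').ne
      rwa [hgc, ← smul_C, smul_mul_assoc, smul_smul, inv_mul_cancel₀ hne, one_smul] at this
    intro i
    by_cases hid : i = d
    · subst hid
      have hsum := f.as_sum_range_C_mul_X_pow' hfd
      rw [Finset.sum_range_succ] at hsum
      have : C (f.coeff i) * X ^ i =
          f - ∑ j ∈ Finset.range i, C (f.coeff j) * X ^ j := by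
        rw [eq_sub_iff_add_eq, add_comm]; exact hsum.symm
      rw [this]
      exact sub_mem hf (sum_mem fun j hj => hlow j (Finset.mem_range.1 hj).ne)
    · exact hlow i hid

/-- A positive-degree coefficient of an element of `HD*` also occurs as a coefficient of `X` in
`HD*`, because `HD*` is stable under `X ↦ X + 1`. -/
theorem coeff_mul_X_mem_HDStar {f : B[X]} (hf : f ∈ HDStar K B[X]) {i : ℕ} (hi : 1 ≤ i) :
    C (f.coeff i) * X ∈ HDStar K B[X] := by
  have h1 := monomial_mem_HDStar (f.natDegree + 1) f (by omega) hf i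
  let φ : B[X] ≃ₐ[K] B[X] := (algEquivAevalXAddC (1 : B)).restrictScalars K
  have h2 := HDStar_map φ h1
  have h3 : φ (C (f.coeff i) * X ^ i) = C (f.coeff i) * (X + 1) ^ i := by
    have : φ (C (f.coeff i) * X ^ i) = aeval (X + C 1) (C (f.coeff i) * X ^ i) := by
      simp [φ]
    rw [this, map_mul, map_pow, aeval_X, aeval_C, Polynomial.algebraMap_eq, C_1]
  rw [h3] at h2
  have h4 := monomial_mem_HDStar _ _ (Nat.lt_succ_self _) h2 1
  rw [coeff_C_mul, coeff_X_add_one_pow, Nat.choose_one_right, pow_one] at h4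
  have h5 := Subalgebra.smul_mem _ h4 ((i : K)⁻¹)
  have hne : (i : K) ≠ 0 := by exact_mod_cast (by omega : i ≠ 0)
  have h6 : f.coeff i * (i : B) = (i : K) • f.coeff i := by
    rw [Algebra.smul_def, map_natCast, mul_comm]
  rwa [h6, ← smul_C, smul_mul_assoc, smul_smul, inv_mul_cancel₀ hne, one_smul] at h5

variable [IsDomain B]

/-- If `B` is not rigid and `HD*` is finitely generated, then `HD*` is noetherian, so the ideal
generated by all `c X^n` forces an equation of integral dependence for `X` over `HD*`; comparing
coefficients of `X^N` gives `X ∈ HD*`. -/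
theorem HDStar_of_not_rigid {δ : Derivation K B B} (hδ : IsLND δ) (hne : δ ≠ 0)
    (hFG : (HDStar K B[X]).FG) : HDStar K B[X] = ⊤ := by
  obtain ⟨b, c, hb, hc, hc0⟩ : ∃ b c, δ b = c ∧ δ c = 0 ∧ c ≠ 0 := by
    obtain ⟨a, ha⟩ : ∃ a, δ a ≠ 0 := by
      by_contra! h
      exact hne (Derivation.ext h)
    obtain ⟨n, h1, h2⟩ := exists_last (isLND_iff.1 hδ (δ a)) ha
    refine ⟨(⇑δ)^[n] a, (⇑δ)^[n] (δ a), ?_, ?_, h1⟩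
    · rw [← Function.iterate_succ_apply, Function.iterate_succ_apply']
    · rwa [Function.iterate_succ_apply'] at h2
  set R := HDStar K B[X] with hR
  have : Algebra.FiniteType K R := (Subalgebra.fg_iff_finiteType R).1 hFG
  have : IsNoetherianRing R := Algebra.FiniteType.isNoetherianRing K R
  let x : ℕ → R := fun n => ⟨C c * X ^ n, C_mul_X_pow_mem_HDStar hδ hb hc n⟩
  let I : ℕ →o Ideal R :=
    ⟨fun n => Submodule.span R (x '' (Finset.range n : Set ℕ)), fun m n hmn =>
      Submodule.span_mono (Set.image_mono (by
        exact_mod_cast Finset.range_mono hmn))⟩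
  obtain ⟨N, hN⟩ := monotone_stabilizes_iff_noetherian.2 ‹IsNoetherian R R› I
  have hx : x N ∈ I N := by
    rw [hN (N + 1) (Nat.le_succ N)]
    exact Submodule.subset_span ⟨N, by simp, rfl⟩
  obtain ⟨r, hr⟩ := Submodule.mem_span_image_finset_iff_exists_fun' R |>.1 hx
  have hr' : ∑ i ∈ Finset.range N, (r i : B[X]) * (C c * X ^ i) = C c * X ^ N := by
    have := congrArg (fun y : R => (y : B[X])) hr
    simpa [x] using this
  have hint : ∑ i ∈ Finset.range N, (r i : B[X]) * X ^ i = X ^ N := by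
    refine mul_left_cancel₀ (C_ne_zero.2 hc0) ?_
    rw [← hr', Finset.mul_sum]
    exact Finset.sum_congr rfl fun i _ => by ring
  have hcoeff : ∑ i ∈ Finset.range N, (r i : B[X]).coeff (N - i) = 1 := by
    have := congrArg (fun p : B[X] => p.coeff N) hint
    simp only [finsetSum_coeff, coeff_X_pow, if_pos] at this
    rw [← this]
    refine Finset.sum_congr rfl fun i hi => ?_
    rw [coeff_mul_X_pow', if_pos (Finset.mem_range.1 hi).le]
  have hX : X ∈ R := by
    have : (X : B[X]) = ∑ i ∈ Finset.range N, C ((r i : B[X]).coeff (N - i)) * X := by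
      rw [← Finset.sum_mul, ← map_sum, hcoeff, C_1, one_mul]
    rw [this]
    refine sum_mem fun i hi => coeff_mul_X_mem_HDStar (r i).2 ?_
    have := Finset.mem_range.1 hi
    omega
  refine eq_top_iff.2 fun f _ => ?_
  induction f using Polynomial.induction_on' with
  | add p q hp hq => exact add_mem (hp trivial) (hq trivial)
  | monomial n a =>
    rw [← C_mul_X_pow_eq_monomial]
    exact mul_mem (C_mem_HDStar a) (pow_mem hX n)

end NonRigid

theorem stmt1 {K B : Type*} [Field K] [IsAlgClosed K] [CharZero K]
    [CommRing B] [IsDomain B] [Algebra K B] [Algebra.FiniteType K B] :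
    HDStar K (Polynomial B) = ⊤ ∨
    ¬ (HDStar K (Polynomial B)).FG ∨
    ((∀ D : Derivation K B B, IsLND D → D = 0) ∧
      (HDStar K (Polynomial B) : Set (Polynomial B)) =
        Set.range (Polynomial.C : B → Polynomial B)) := by
  by_cases hB : ∀ D : Derivation K B B, IsLND D → D = 0
  · exact Or.inr (Or.inr ⟨hB, HDStar_of_rigid hB⟩)
  · push Not at hB
    obtain ⟨δ, hδ, hne⟩ := hB
    by_cases hFG : (HDStar K (Polynomial B)).FG
    · exact Or.inl (HDStar_of_not_rigid hδ hne hFG)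
    · exact Or.inr (Or.inl hFG)
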